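/- arXiv:0908.1976 — 2 statements merged into one kernel-verified Lean document; each statement's English description precedes it below -/
import Mathlib

section
/- In the notation of the context, let ε be a grading of Δ_i and let w, τ ∈ W_i. Define the cross-acted grading τ×ε of Δ_i by (τ×ε)(α) = ε(τ⁻¹α). Then m_{τ×ε}(w) = m_ε(wτ) + m_ε(τ) in M_θ. -/
open scoped RealInnerProductSpace

set_option synthInstance.maxHeartbeats 1000000

noncomputable section

abbrev EucB (n : ℕ) := EuclideanSpace ℝ (Fin n)

def eB (n : ℕ) (i : Fin n) : EucB n := EuclideanSpace.single i (1 : ℝ)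

def DeltaB (n : ℕ) : Set (EucB n) :=
  {v | (∃ i j : Fin n, i < j ∧
          (v = eB n i + eB n j ∨ v = eB n i - eB n j ∨
           v = -eB n i + eB n j ∨ v = -eB n i - eB n j)) ∨
        ∃ i : Fin n, v = eB n i ∨ v = -eB n i}

def DeltaBpos (n : ℕ) : Set (EucB n) :=
  {v | (∃ i j : Fin n, i < j ∧ (v = eB n i + eB n j ∨ v = eB n i - eB n j)) ∨
        ∃ i : Fin n, v = eB n i}

def corootB (n : ℕ) (α : EucB n) : EucB n := (2 / ⟪α, α⟫) • α

def corootForm (n : ℕ) (α : EucB n) : Module.Dual ℝ (EucB n) where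
  toFun x := ⟪x, corootB n α⟫
  map_add' x y := inner_add_left _ _ _
  map_smul' c x := by simpa using real_inner_smul_left x (corootB n α) c

def sReflB (n : ℕ) (α : EucB n) : EucB n ≃ₗ[ℝ] EucB n :=
  if h : corootForm n α α = 2 then Module.reflection h else LinearEquiv.refl ℝ (EucB n)

def WeylB (n : ℕ) : Subgroup (EucB n ≃ₗ[ℝ] EucB n) :=
  Subgroup.closure {g | ∃ α ∈ DeltaB n, g = sReflB n α}

/-- The coroot lattice `Q∨`, the `ℤ`-span of the coroots. -/
def QvB (n : ℕ) : Submodule ℤ (EucB n) :=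
  Submodule.span ℤ {v | ∃ α ∈ DeltaB n, v = corootB n α}

/-- The submodule `2Q∨` of `Q∨`. -/
def twoQB (n : ℕ) : Submodule ℤ ↥(QvB n) :=
  LinearMap.range ((2 : ℤ) • (LinearMap.id : ↥(QvB n) →ₗ[ℤ] ↥(QvB n)))

/-- The quotient `Q∨/2Q∨`. -/
abbrev QModB (n : ℕ) := ↥(QvB n) ⧸ twoQB n

/-- The quotient map `π : Q∨ → Q∨/2Q∨`. -/
def piQ (n : ℕ) : ↥(QvB n) →ₗ[ℤ] QModB n := (twoQB n).mkQ

/-- The `θ`-fixed vectors of `Q∨`. -/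
def fixedQ (n : ℕ) (θ : EucB n ≃ₗ[ℝ] EucB n) : Submodule ℤ ↥(QvB n) where
  carrier := {v | θ (v : EucB n) = (v : EucB n)}
  add_mem' := by
    intro a b ha hb
    simp only [Set.mem_setOf_eq, Submodule.coe_add, map_add] at *
    rw [ha, hb]
  zero_mem' := by simp
  smul_mem' := by
    intro c a ha
    simp only [Set.mem_setOf_eq, Submodule.coe_smul, map_zsmul] at *
    rw [ha]

/-- The `θ`-antifixed vectors of `Q∨` (those with `θv = −v`). -/
def negQ (n : ℕ) (θ : EucB n ≃ₗ[ℝ] EucB n) : Submodule ℤ ↥(QvB n) where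
  carrier := {v | θ (v : EucB n) = -(v : EucB n)}
  add_mem' := by
    intro a b ha hb
    simp only [Set.mem_setOf_eq, Submodule.coe_add, map_add] at *
    rw [ha, hb]; abel
  zero_mem' := by simp
  smul_mem' := by
    intro c a ha
    simp only [Set.mem_setOf_eq, Submodule.coe_smul, map_zsmul] at *
    rw [ha, smul_neg]

/-- `A₋ = π({v ∈ Q∨ : θv = v})`. -/
def AmB (n : ℕ) (θ : EucB n ≃ₗ[ℝ] EucB n) : Submodule ℤ (QModB n) :=
  (fixedQ n θ).map (piQ n)

/-- `A₊ = π({v ∈ Q∨ : θv = −v})`. -/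
def ApB (n : ℕ) (θ : EucB n ≃ₗ[ℝ] EucB n) : Submodule ℤ (QModB n) :=
  (negQ n θ).map (piQ n)

/-- `M_θ = A₋/(A₋ ∩ A₊)`. -/
abbrev MthB (n : ℕ) (θ : EucB n ≃ₗ[ℝ] EucB n) :=
  ↥(AmB n θ) ⧸ (ApB n θ).comap (AmB n θ).subtype

open Classical in
/-- `m_β ∈ M_θ`, the class of `π(β∨)` (defined when `β∨ ∈ Q∨` is fixed by `θ`,
e.g. for `β` an imaginary root). -/
def mB (n : ℕ) (θ : EucB n ≃ₗ[ℝ] EucB n) (β : EucB n) : MthB n θ :=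
  if h : corootB n β ∈ QvB n ∧ θ (corootB n β) = corootB n β then
    Submodule.Quotient.mk
      ⟨piQ n ⟨corootB n β, h.1⟩,
        Submodule.mem_map_of_mem (p := fixedQ n θ) (by exact h.2)⟩
  else 0

/-- The imaginary roots of `θ` that are positive. -/
def ImPosB (n : ℕ) (θ : EucB n ≃ₗ[ℝ] EucB n) : Set (EucB n) :=
  {α | α ∈ DeltaBpos n ∧ θ α = α}

/-- The simple roots `Π_i` of the positive imaginary system: positive imaginary roots
that are not sums of two positive imaginary roots. -/
def SimpleImB (n : ℕ) (θ : EucB n ≃ₗ[ℝ] EucB n) : Set (EucB n) :=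
  {β | β ∈ ImPosB n θ ∧ ¬∃ γ δ : EucB n, γ ∈ ImPosB n θ ∧ δ ∈ ImPosB n θ ∧ β = γ + δ}

/-- The product `s_{β_N}⋯s_{β₁}` of the reflections of a word `(β₁, …, β_N)`. -/
def wordProdB (n : ℕ) (L : List (EucB n)) : EucB n ≃ₗ[ℝ] EucB n :=
  ((L.map (sReflB n)).reverse).prod

/-- `S(β₁,…,β_N) = ∑_j ε(s_{β₁}⋯s_{β_{j−1}}(β_j)) · m_{β_j}`, computed with an
accumulator recording the prefix product `s_{β₁}⋯s_{β_{j−1}}`. -/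
def SwordB (n : ℕ) (θ : EucB n ≃ₗ[ℝ] EucB n) (ε : EucB n → ZMod 2) :
    (EucB n ≃ₗ[ℝ] EucB n) → List (EucB n) → MthB n θ
  | _, [] => 0
  | acc, β :: rest =>
      (ε (acc β)).val • mB n θ β + SwordB n θ ε (acc * sReflB n β) rest

/-!
A grading `ε` of `Δ_i` extends additively to the `ℤ`-span of `Δ_i`, and since this lattice is free
it lifts to an integral coweight: there is `x ∈ ℝⁿ` with `⟪α, x⟫ ≡ ε(α) mod 2` for every imaginary
root `α`. Now `x - s_β x = ⟪β, x⟫ β∨`, so along any word in imaginary roots with product `w`, where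
the first letter acts first, the sum `S` telescopes to the class of `x - w x` in `M_θ`. In
particular `S` depends only on `w`. Splitting a word for `w τ` into a word for `τ` followed by one
for `w` gives `m_ε(w τ) = m_ε(τ) + m_{τ×ε}(w)`, and `M_θ` is killed by two.
-/

section GradingExtension

variable {V A : Type*} [NormedAddCommGroup V] [InnerProductSpace ℝ V]

theorem exists_inner_neg_of_multiset_sum_eq_neg {α : V} (hα : α ≠ 0) {s : Multiset V}
    (hs : s.sum = -α) : ∃ β ∈ s, ⟪α, β⟫ < 0 := by
  by_contra! hnonneg
  have hsum : ⟪α, s.sum⟫ = (s.map fun β => ⟪α, β⟫).sum := map_multiset_sum (innerSL ℝ α) s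
  have : 0 ≤ (s.map fun β => ⟪α, β⟫).sum := Multiset.sum_nonneg (by simpa using hnonneg)
  rw [← hsum, hs, inner_neg_right, neg_nonneg] at this
  exact hα (real_inner_self_nonpos.1 this)

-- In a relation `∑ αₖ = 0` some `αₖ` makes an obtuse angle with `α₁`; merging the two, or
-- cancelling them if they are opposite, gives a shorter relation.
theorem sum_map_eq_zero_of_additive_on [AddCommMonoid A] {Φ : Set V} (h0 : (0 : V) ∉ Φ)
    (hΦ : ∀ α ∈ Φ, ∀ β ∈ Φ, ⟪α, β⟫ < 0 → α + β = 0 ∨ α + β ∈ Φ) {ε : V → A}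
    (hneg : ∀ α ∈ Φ, -α ∈ Φ → ε α + ε (-α) = 0)
    (hadd : ∀ α ∈ Φ, ∀ β ∈ Φ, α + β ∈ Φ → ε (α + β) = ε α + ε β)
    (s : Multiset V) (hs : ∀ α ∈ s, α ∈ Φ) (hsum : s.sum = 0) : (s.map ε).sum = 0 := by
  induction hcard : s.card using Nat.strong_induction_on generalizing s with
  | _ m ih =>
    rcases s.empty_or_exists_mem with rfl | ⟨α, hαs⟩
    · rfl
    obtain ⟨t, rfl⟩ := Multiset.exists_cons_of_mem hαs
    have hα : α ∈ Φ := hs α hαs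
    have ht : t.sum = -α := by rwa [Multiset.sum_cons, add_comm, add_eq_zero_iff_eq_neg] at hsum
    obtain ⟨β, hβt, hαβ⟩ :=
      exists_inner_neg_of_multiset_sum_eq_neg (ne_of_mem_of_not_mem hα h0) ht
    obtain ⟨u, rfl⟩ := Multiset.exists_cons_of_mem hβt
    have hβ : β ∈ Φ := hs β (by simp)
    have hu : ∀ γ ∈ u, γ ∈ Φ := fun γ hγ => hs γ (by simp [hγ])
    simp only [Multiset.sum_cons, Multiset.card_cons, Multiset.map_cons, ← add_assoc] at *
    rcases hΦ α hα β hβ hαβ with hopp | hroot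
    · obtain rfl : β = -α := eq_neg_of_add_eq_zero_right hopp
      rw [hneg α hα hβ, zero_add]
      exact ih _ (by omega) u hu (by simpa using hsum) rfl
    · rw [← hadd α hα β hβ hroot]
      simpa using ih (u.card + 1) (by omega) ((α + β) ::ₘ u) (by simpa [hroot] using hu)
        (by simpa using hsum) (by simp)

theorem exists_multiset_of_mem_span_graphOn {M : Type*} [AddCommGroup M] [AddCommGroup A]
    {Φ : Set M} (hΦneg : ∀ α ∈ Φ, -α ∈ Φ) {ε : M → A} (hneg : ∀ α ∈ Φ, ε (-α) = -ε α)
    {p : M × A} (hp : p ∈ Submodule.span ℤ (Φ.graphOn ε)) :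
    ∃ s : Multiset M, (∀ α ∈ s, α ∈ Φ) ∧ p = (s.sum, (s.map ε).sum) := by
  rw [← Submodule.mem_toAddSubgroup, Submodule.span_int_eq_addSubgroupClosure] at hp
  induction hp using AddSubgroup.closure_induction with
  | mem p hp =>
    obtain ⟨α, hα, rfl⟩ := hp
    exact ⟨{α}, by simpa using hα, by simp⟩
  | zero => exact ⟨0, by simp, rfl⟩
  | add p q _ _ ihp ihq =>
    obtain ⟨s, hs, rfl⟩ := ihp
    obtain ⟨t, ht, rfl⟩ := ihq
    exact ⟨s + t, fun α hα => (Multiset.mem_add.1 hα).elim (hs α) (ht α), by simp⟩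
  | neg p _ ih =>
    obtain ⟨s, hs, rfl⟩ := ih
    refine ⟨s.map fun α => -α, by simpa using fun α hα => hΦneg α (hs α hα), ?_⟩
    have hmap : s.map (fun α => ε (-α)) = s.map fun α => -ε α :=
      Multiset.map_congr rfl fun α hα => hneg α (hs α hα)
    simp [hmap, Multiset.sum_map_neg']

theorem exists_linearMap_span_of_additive_on [AddCommGroup A] {Φ : Set V} (h0 : (0 : V) ∉ Φ)
    (hΦneg : ∀ α ∈ Φ, -α ∈ Φ)
    (hΦ : ∀ α ∈ Φ, ∀ β ∈ Φ, ⟪α, β⟫ < 0 → α + β = 0 ∨ α + β ∈ Φ) {ε : V → A}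
    (hneg : ∀ α ∈ Φ, ε (-α) = -ε α)
    (hadd : ∀ α ∈ Φ, ∀ β ∈ Φ, α + β ∈ Φ → ε (α + β) = ε α + ε β) :
    ∃ φ : Submodule.span ℤ Φ →ₗ[ℤ] A,
      ∀ α (hα : α ∈ Φ), φ ⟨α, Submodule.subset_span hα⟩ = ε α := by
  set Γ : Submodule ℤ (V × A) := Submodule.span ℤ (Φ.graphOn ε)
  have hΓ : ∀ p ∈ Γ, p.1 = 0 → p.2 = 0 := by
    intro p hp hp1
    obtain ⟨s, hs, rfl⟩ := exists_multiset_of_mem_span_graphOn hΦneg hneg hp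
    exact sum_map_eq_zero_of_additive_on h0 hΦ (fun α hα _ => by rw [hneg α hα, add_neg_cancel])
      hadd s hs hp1
  have hdom : Submodule.span ℤ Φ ≤ Γ.toLinearPMap.domain := by
    rw [Submodule.toLinearPMap_domain, Submodule.map_span, LinearMap.coe_fst, Set.image_fst_graphOn]
  refine ⟨Γ.toLinearPMap.toFun ∘ₗ Submodule.inclusion hdom, fun α hα => ?_⟩
  have hmem := Γ.mem_graph_toLinearPMap hΓ ⟨α, hdom (Submodule.subset_span hα)⟩
  have := hΓ _ (sub_mem hmem (Submodule.subset_span (Set.mem_image_of_mem _ hα)))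
  exact sub_eq_zero.1 (this (sub_self α))

end GradingExtension

theorem exists_linearMap_real_lift {V : Type*} [AddCommGroup V] {Λ : Submodule ℤ V}
    [Module.Projective ℤ Λ] {m : ℕ} (φ : Λ →ₗ[ℤ] ZMod m) :
    ∃ g : V →ₗ[ℤ] ℝ, ∀ v : Λ, ∃ k : ℤ, g v = k ∧ (k : ZMod m) = φ v := by
  obtain ⟨ψ, hψ⟩ := Module.projective_lifting_property
    (Int.castAddHom (ZMod m)).toIntLinearMap φ ZMod.intCast_surjective
  obtain ⟨g, hg⟩ := (Module.Baer.of_divisible (A := ℝ)).extension_property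
    Λ.subtype Λ.injective_subtype ((Int.castAddHom ℝ).toIntLinearMap ∘ₗ ψ)
  exact ⟨g, fun v => ⟨ψ v, LinearMap.congr_fun hg v, LinearMap.congr_fun hψ v⟩⟩

section Reflections

variable {n : ℕ}

theorem sReflB_apply (α x : EucB n) : sReflB n α x = x - ⟪x, corootB n α⟫ • α := by
  unfold sReflB
  split_ifs with h
  · rfl
  · obtain rfl : α = 0 := by
      by_contra hα
      refine h ?_
      change ⟪α, corootB n α⟫ = 2
      rw [corootB, real_inner_smul_right, div_mul_cancel₀ _ (inner_self_ne_zero.2 hα)]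
    simp

theorem sReflB_eq_reflection (α : EucB n) :
    sReflB n α = ((ℝ ∙ α)ᗮ.reflection).toLinearEquiv := by
  ext1 x
  rw [sReflB_apply, LinearIsometryEquiv.coe_toLinearEquiv, Submodule.reflection_orthogonal_apply,
    Submodule.reflection_singleton_apply, neg_sub, corootB, real_inner_smul_right,
    real_inner_self_eq_norm_sq, real_inner_comm, two_nsmul, ← add_smul]
  congr 2
  simp only [RCLike.ofReal_real_eq_id, id_eq]
  ring

theorem sReflB_mul_self (α : EucB n) : sReflB n α * sReflB n α = 1 := by
  rw [sReflB_eq_reflection]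
  exact LinearEquiv.ext fun x => (ℝ ∙ α)ᗮ.reflection_reflection x

theorem inv_sReflB (α : EucB n) : (sReflB n α)⁻¹ = sReflB n α :=
  inv_eq_of_mul_eq_one_left (sReflB_mul_self α)

theorem norm_sReflB (α x : EucB n) : ‖sReflB n α x‖ = ‖x‖ := by
  rw [sReflB_eq_reflection]
  exact LinearIsometryEquiv.norm_map _ x

theorem inner_sReflB (α x y : EucB n) : ⟪sReflB n α x, sReflB n α y⟫ = ⟪x, y⟫ := by
  rw [sReflB_eq_reflection]
  exact LinearIsometryEquiv.inner_map_map _ x y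

end Reflections

section IntegerLattice

variable {n : ℕ}

/-- The integer lattice `ℤⁿ`, which is the root lattice of type `Bₙ`. -/
def intLattice (n : ℕ) : Submodule ℤ (EucB n) :=
  Submodule.span ℤ (Set.range (eB n))

theorem eB_mem_intLattice (i : Fin n) : eB n i ∈ intLattice n :=
  Submodule.subset_span (Set.mem_range_self i)

theorem mem_intLattice_iff {v : EucB n} : v ∈ intLattice n ↔ ∀ i, ∃ z : ℤ, v i = z := by
  have : eB n = (EuclideanSpace.basisFun (Fin n) ℝ).toBasis := by
    ext i j
    simp [eB]
  rw [intLattice, this, Module.Basis.mem_span_iff_repr_mem]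
  simp [eq_comm]

theorem projective_of_le_intLattice {Λ : Submodule ℤ (EucB n)} (hΛ : Λ ≤ intLattice n) :
    Module.Projective ℤ Λ := by
  have : Module.Finite ℤ (intLattice n) := Module.Finite.span_of_finite ℤ (Set.finite_range _)
  have : IsNoetherian ℤ Λ := isNoetherian_of_le hΛ
  have : Module.IsTorsionFree ℤ (EucB n) := Module.IsTorsionFree.trans ℝ
  exact Module.Projective.of_free

theorem exists_int_inner_of_mem_intLattice {v w : EucB n} (hv : v ∈ intLattice n)
    (hw : w ∈ intLattice n) : ∃ z : ℤ, ⟪v, w⟫ = z := by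
  choose a ha using mem_intLattice_iff.1 hv
  choose b hb using mem_intLattice_iff.1 hw
  exact ⟨∑ i, b i * a i, by simp [PiLp.inner_apply, ha, hb]⟩

theorem norm_sub_units_smul_eB_sq (v : EucB n) (i : Fin n) (σ : ℤˣ) (hσ : v i = (σ : ℤ)) :
    ‖v - σ • eB n i‖ ^ 2 = ‖v‖ ^ 2 - 1 := by
  have hinner : ⟪v, σ • eB n i⟫ = 1 := by
    rcases Int.units_eq_one_or σ with rfl | rfl <;>
      simp [eB, EuclideanSpace.inner_single_right, hσ, Units.smul_def]
  have hnorm : ‖σ • eB n i‖ = 1 := by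
    rcases Int.units_eq_one_or σ with rfl | rfl <;> simp [eB, Units.smul_def]
  rw [norm_sub_sq_real, hinner, hnorm]
  ring

theorem exists_apply_eq_units_of_norm_sq_lt_four {v : EucB n} (hv : v ∈ intLattice n)
    (h0 : v ≠ 0) (hlt : ‖v‖ ^ 2 < 4) : ∃ i, ∃ σ : ℤˣ, v i = (σ : ℤ) := by
  obtain ⟨i, hi⟩ : ∃ i, v i ≠ 0 := by
    by_contra! h
    exact h0 (by ext i; exact h i)
  obtain ⟨z, hz⟩ := mem_intLattice_iff.1 hv i
  have hz0 : z ≠ 0 := by rintro rfl; simp [hz] at hi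
  have hz4 : (z : ℝ) ^ 2 < 4 := by
    refine lt_of_le_of_lt ?_ hlt
    rw [← hz, ← sq_abs, ← Real.norm_eq_abs]
    exact pow_le_pow_left₀ (norm_nonneg _) (PiLp.norm_apply_le v i) 2
  have hunit : IsUnit z := by
    have : z ^ 2 < 4 := by exact_mod_cast hz4
    rw [Int.isUnit_iff]
    have : z < 2 := by nlinarith
    have : -2 < z := by nlinarith
    omega
  exact ⟨i, hunit.unit, hz⟩

theorem exists_inner_eq_of_int_linearMap (g : EucB n →ₗ[ℤ] ℝ) :
    ∃ x : EucB n, ∀ v ∈ intLattice n, ⟪v, x⟫ = g v := by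
  let x : EucB n := WithLp.toLp 2 fun i => g (eB n i)
  have heq : Set.EqOn (((innerₗ (EucB n)).flip x).restrictScalars ℤ) g (Set.range (eB n)) := by
    rintro _ ⟨i, rfl⟩
    change ⟪eB n i, x⟫ = g (eB n i)
    simp [x, eB, EuclideanSpace.inner_single_left]
  exact ⟨x, fun v hv => LinearMap.eqOn_span heq hv⟩

end IntegerLattice

section RootSystem

variable {n : ℕ}

theorem mem_DeltaB_of_eq_units_smul_eB {v : EucB n} {i : Fin n} {σ : ℤˣ} (hv : v = σ • eB n i) :
    v ∈ DeltaB n := by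
  refine Or.inr ⟨i, ?_⟩
  rcases Int.units_eq_one_or σ with rfl | rfl <;> simp [hv, Units.smul_def]

theorem mem_DeltaB_of_eq_units_smul_add {v : EucB n} {i j : Fin n} (hij : i ≠ j) {σ τ : ℤˣ}
    (hv : v = σ • eB n i + τ • eB n j) : v ∈ DeltaB n := by
  wlog hlt : i < j generalizing i j σ τ
  · exact this hij.symm (by rw [hv, add_comm]) (hij.lt_or_gt.resolve_left hlt)
  refine Or.inl ⟨i, j, hlt, ?_⟩
  rcases Int.units_eq_one_or σ with rfl | rfl <;>
    rcases Int.units_eq_one_or τ with rfl | rfl <;>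
      simp [hv, Units.smul_def, sub_eq_add_neg]

theorem mem_intLattice_of_mem_DeltaB {v : EucB n} (hv : v ∈ DeltaB n) : v ∈ intLattice n := by
  have he := eB_mem_intLattice (n := n)
  rcases hv with ⟨i, j, -, rfl | rfl | rfl | rfl⟩ | ⟨i, rfl | rfl⟩
  · exact add_mem (he i) (he j)
  · exact sub_mem (he i) (he j)
  · exact add_mem (neg_mem (he i)) (he j)
  · exact sub_mem (neg_mem (he i)) (he j)
  · exact he i
  · exact neg_mem (he i)

theorem norm_sq_of_mem_DeltaB {v : EucB n} (hv : v ∈ DeltaB n) : ‖v‖ ^ 2 = 1 ∨ ‖v‖ ^ 2 = 2 := by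
  have hnorm (i : Fin n) : ‖eB n i‖ ^ 2 = 1 := by simp [eB]
  have hinner {i j : Fin n} (hij : i < j) : ⟪eB n i, eB n j⟫ = 0 := by
    simp [eB, EuclideanSpace.inner_single_left, hij.ne]
  rcases hv with ⟨i, j, hij, rfl | rfl | rfl | rfl⟩ | ⟨i, rfl | rfl⟩
  · right; rw [norm_add_sq_real, hinner hij, hnorm, hnorm]; norm_num
  · right; rw [norm_sub_sq_real, hinner hij, hnorm, hnorm]; norm_num
  · right; rw [norm_add_sq_real, inner_neg_left, hinner hij, norm_neg, hnorm, hnorm]; norm_num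
  · right; rw [norm_sub_sq_real, inner_neg_left, hinner hij, norm_neg, hnorm, hnorm]; norm_num
  · exact Or.inl (hnorm i)
  · exact Or.inl (by rw [norm_neg, hnorm])

theorem mem_DeltaB_iff {v : EucB n} :
    v ∈ DeltaB n ↔ v ∈ intLattice n ∧ (‖v‖ ^ 2 = 1 ∨ ‖v‖ ^ 2 = 2) := by
  refine ⟨fun hv => ⟨mem_intLattice_of_mem_DeltaB hv, norm_sq_of_mem_DeltaB hv⟩, ?_⟩
  rintro ⟨hv, hnorm⟩
  obtain ⟨i, σ, hσ⟩ := exists_apply_eq_units_of_norm_sq_lt_four hv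
    (by rintro rfl; norm_num at hnorm) (by rcases hnorm with h | h <;> rw [h] <;> norm_num)
  have hi := norm_sub_units_smul_eB_sq v i σ hσ
  rcases hnorm with h1 | h2
  · rw [h1, sub_self, sq_eq_zero_iff, norm_eq_zero, sub_eq_zero] at hi
    exact mem_DeltaB_of_eq_units_smul_eB hi
  · set u := v - σ • eB n i with hu
    have hu1 : ‖u‖ ^ 2 = 1 := by rw [hi, h2]; norm_num
    have hui : u i = 0 := by simp [hu, hσ, eB, Units.smul_def]
    have hu0 : u ≠ 0 := by
      rintro h0
      simp [h0] at hu1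
    have hu_mem : u ∈ intLattice n := sub_mem hv (zsmul_mem (eB_mem_intLattice i) σ)
    obtain ⟨j, τ, hτ⟩ :=
      exists_apply_eq_units_of_norm_sq_lt_four hu_mem hu0 (by rw [hu1]; norm_num)
    have hij : i ≠ j := by
      rintro rfl
      rw [hui] at hτ
      exact τ.ne_zero (Int.cast_eq_zero.1 hτ.symm)
    have hj := norm_sub_units_smul_eB_sq u j τ hτ
    rw [hu1, sub_self, sq_eq_zero_iff, norm_eq_zero, sub_eq_zero] at hj
    exact mem_DeltaB_of_eq_units_smul_add hij (by rw [← hj, hu, add_sub_cancel])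

theorem ne_zero_of_mem_DeltaB {α : EucB n} (hα : α ∈ DeltaB n) : α ≠ 0 := by
  rintro rfl
  simpa using (mem_DeltaB_iff.1 hα).2

theorem neg_mem_DeltaB {α : EucB n} (hα : α ∈ DeltaB n) : -α ∈ DeltaB n := by
  rw [mem_DeltaB_iff] at hα ⊢
  exact ⟨neg_mem hα.1, by rw [norm_neg]; exact hα.2⟩

theorem add_eq_zero_or_mem_DeltaB_of_inner_neg {α β : EucB n} (hα : α ∈ DeltaB n)
    (hβ : β ∈ DeltaB n) (hneg : ⟪α, β⟫ < 0) : α + β = 0 ∨ α + β ∈ DeltaB n := by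
  rw [mem_DeltaB_iff] at hα hβ
  obtain ⟨z, hz⟩ := exists_int_inner_of_mem_intLattice hα.1 hβ.1
  have hz1 : (z : ℝ) ≤ -1 := by
    rw [hz] at hneg
    exact_mod_cast Int.le_sub_one_of_lt (Int.cast_lt_zero.1 hneg)
  obtain ⟨k, hk⟩ := exists_int_inner_of_mem_intLattice (add_mem hα.1 hβ.1) (add_mem hα.1 hβ.1)
  rw [real_inner_self_eq_norm_sq] at hk
  have hk2 : (k : ℝ) ≤ 2 := by
    rw [← hk, norm_add_sq_real, hz]
    rcases hα.2 with h | h <;> rcases hβ.2 with h' | h' <;> rw [h, h'] <;> linarith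
  have hk0 : (0 : ℝ) ≤ k := hk ▸ sq_nonneg _
  norm_cast at hk0 hk2
  rw [mem_DeltaB_iff, hk]
  interval_cases k
  · exact Or.inl (by simpa using hk)
  · exact Or.inr ⟨add_mem hα.1 hβ.1, by norm_num⟩
  · exact Or.inr ⟨add_mem hα.1 hβ.1, by norm_num⟩

theorem exists_int_inner_corootB {α β : EucB n} (hα : α ∈ intLattice n) (hβ : β ∈ DeltaB n) :
    ∃ k : ℤ, ⟪α, corootB n β⟫ = k := by
  rw [mem_DeltaB_iff] at hβ
  obtain ⟨z, hz⟩ := exists_int_inner_of_mem_intLattice hα hβ.1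
  rw [corootB, real_inner_smul_right, hz, real_inner_self_eq_norm_sq]
  rcases hβ.2 with h | h <;> rw [h]
  · exact ⟨2 * z, by simp⟩
  · exact ⟨z, by simp⟩

theorem sReflB_mem_DeltaB {α β : EucB n} (hα : α ∈ DeltaB n) (hβ : β ∈ DeltaB n) :
    sReflB n β α ∈ DeltaB n := by
  rw [mem_DeltaB_iff] at hα ⊢
  obtain ⟨k, hk⟩ := exists_int_inner_corootB hα.1 hβ
  refine ⟨?_, by rw [norm_sReflB]; exact hα.2⟩
  rw [sReflB_apply, hk, Int.cast_smul_eq_zsmul]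
  exact sub_mem hα.1 (zsmul_mem (mem_intLattice_of_mem_DeltaB hβ) k)

end RootSystem

section Imaginary

variable {n : ℕ} {θ : EucB n ≃ₗ[ℝ] EucB n}

/-- The imaginary roots `Δ_i` of `θ`. -/
def imagRoots (n : ℕ) (θ : EucB n ≃ₗ[ℝ] EucB n) : Set (EucB n) :=
  {α | α ∈ DeltaB n ∧ θ α = α}

/-- `x` represents `ε` if `ε α` is the reduction modulo two of the integer `⟪α, x⟫` for every
imaginary root `α`; such an `x` is an integral coweight of `Δ_i` lifting the grading. -/
def RepresentsGrading (θ : EucB n ≃ₗ[ℝ] EucB n) (ε : EucB n → ZMod 2) (x : EucB n) : Prop :=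
  ∀ α ∈ imagRoots n θ, ∃ k : ℤ, ⟪α, x⟫ = k ∧ (k : ZMod 2) = ε α

theorem SimpleImB_subset_imagRoots : SimpleImB n θ ⊆ imagRoots n θ := by
  rintro β ⟨⟨⟨i, j, hij, h⟩ | ⟨i, h⟩, hθ⟩, -⟩
  · exact ⟨Or.inl ⟨i, j, hij, by tauto⟩, hθ⟩
  · exact ⟨Or.inr ⟨i, Or.inl h⟩, hθ⟩

theorem sReflB_mem_imagRoots {α β : EucB n} (hα : α ∈ imagRoots n θ) (hβ : β ∈ imagRoots n θ) :
    sReflB n β α ∈ imagRoots n θ :=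
  ⟨sReflB_mem_DeltaB hα.1 hβ.1, by rw [sReflB_apply, map_sub, map_smul, hα.2, hβ.2]⟩

theorem exists_representsGrading {ε : EucB n → ZMod 2}
    (hneg : ∀ α ∈ imagRoots n θ, ε (-α) = ε α)
    (hadd : ∀ α ∈ imagRoots n θ, ∀ β ∈ imagRoots n θ, α + β ∈ DeltaB n →
      ε (α + β) = ε α + ε β) :
    ∃ x, RepresentsGrading θ ε x := by
  have hroot : ∀ α ∈ imagRoots n θ, ∀ β ∈ imagRoots n θ, ⟪α, β⟫ < 0 →
      α + β = 0 ∨ α + β ∈ imagRoots n θ := fun α hα β hβ hαβ =>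
    (add_eq_zero_or_mem_DeltaB_of_inner_neg hα.1 hβ.1 hαβ).imp_right fun h =>
      ⟨h, by rw [map_add, hα.2, hβ.2]⟩
  obtain ⟨φ, hφ⟩ := exists_linearMap_span_of_additive_on (Φ := imagRoots n θ)
    (fun h => ne_zero_of_mem_DeltaB h.1 rfl)
    (fun α hα => ⟨neg_mem_DeltaB hα.1, by rw [map_neg, hα.2]⟩) hroot
    (fun α hα => by rw [hneg α hα, ZMod.neg_eq_self_mod_two])
    (fun α hα β hβ h => hadd α hα β hβ h.1)
  have hle : Submodule.span ℤ (imagRoots n θ) ≤ intLattice n :=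
    Submodule.span_le.2 fun α hα => mem_intLattice_of_mem_DeltaB hα.1
  have := projective_of_le_intLattice hle
  obtain ⟨g, hg⟩ := exists_linearMap_real_lift φ
  obtain ⟨x, hx⟩ := exists_inner_eq_of_int_linearMap g
  refine ⟨x, fun α hα => ?_⟩
  obtain ⟨k, hk, hkφ⟩ := hg ⟨α, Submodule.subset_span hα⟩
  exact ⟨k, (hx α (mem_intLattice_of_mem_DeltaB hα.1)).trans hk, hkφ.trans (hφ α hα)⟩

theorem RepresentsGrading.sReflB {ε : EucB n → ZMod 2} {x β : EucB n}
    (hx : RepresentsGrading θ ε x) (hβ : β ∈ imagRoots n θ) :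
    RepresentsGrading θ (fun α => ε (sReflB n β α)) (sReflB n β x) := by
  intro α hα
  obtain ⟨k, hk, hkε⟩ := hx _ (sReflB_mem_imagRoots hα hβ)
  refine ⟨k, ?_, hkε⟩
  rw [← hk, ← inner_sReflB β, ← LinearEquiv.mul_apply, sReflB_mul_self, LinearEquiv.coe_one, id]

end Imaginary

section WordSum

variable {n : ℕ} {θ : EucB n ≃ₗ[ℝ] EucB n} {ε : EucB n → ZMod 2}

/-- The class in `M_θ` of a `θ`-fixed element of the coroot lattice. -/
def fixedQClass (n : ℕ) (θ : EucB n ≃ₗ[ℝ] EucB n) : fixedQ n θ →ₗ[ℤ] MthB n θ :=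
  ((ApB n θ).comap (AmB n θ).subtype).mkQ ∘ₗ (piQ n).submoduleMap (fixedQ n θ)

theorem fixedQClass_surjective : Function.Surjective (fixedQClass n θ) :=
  (Submodule.mkQ_surjective _).comp ((piQ n).submoduleMap_surjective _)

theorem fixedQClass_two_zsmul (u : fixedQ n θ) : fixedQClass n θ ((2 : ℤ) • u) = 0 := by
  have hzero : (piQ n).submoduleMap (fixedQ n θ) ((2 : ℤ) • u) = 0 :=
    Subtype.ext ((Submodule.Quotient.mk_eq_zero (twoQB n)).2 ⟨u, rfl⟩)
  exact (congrArg ((ApB n θ).comap (AmB n θ).subtype).mkQ hzero).trans (map_zero _)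

theorem MthB_add_self (m : MthB n θ) : m + m = 0 := by
  obtain ⟨u, rfl⟩ := fixedQClass_surjective m
  rw [← two_zsmul, ← map_zsmul, fixedQClass_two_zsmul]

theorem intCast_val_smul_MthB (k : ℤ) (m : MthB n θ) : (k : ZMod 2).val • m = k • m := by
  rw [← natCast_zsmul, ZMod.val_intCast, Nat.cast_ofNat]
  conv_rhs => rw [← Int.emod_add_mul_ediv k 2, add_smul, mul_smul, two_zsmul, MthB_add_self,
    add_zero]

theorem exists_fixedQClass_eq_mB {β : EucB n} (hβ : β ∈ imagRoots n θ) :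
    ∃ u : fixedQ n θ, ((u : QvB n) : EucB n) = corootB n β ∧ fixedQClass n θ u = mB n θ β := by
  have hmem : corootB n β ∈ QvB n ∧ θ (corootB n β) = corootB n β :=
    ⟨Submodule.subset_span ⟨β, hβ.1, rfl⟩, by rw [corootB, map_smul, hβ.2]⟩
  exact ⟨⟨⟨_, hmem.1⟩, hmem.2⟩, rfl, by rw [mB, dif_pos hmem]; rfl⟩

theorem wordProdB_cons (β : EucB n) (L : List (EucB n)) :
    wordProdB n (β :: L) = wordProdB n L * sReflB n β := by
  simp [wordProdB]

theorem wordProdB_append (K L : List (EucB n)) :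
    wordProdB n (K ++ L) = wordProdB n L * wordProdB n K := by
  simp [wordProdB]

theorem SwordB_comp (g acc : EucB n ≃ₗ[ℝ] EucB n) (L : List (EucB n)) :
    SwordB n θ (fun α => ε (g α)) acc L = SwordB n θ ε (g * acc) L := by
  induction L generalizing acc with
  | nil => rfl
  | cons β L ih => simp only [SwordB, ih, mul_assoc, LinearEquiv.mul_apply]

theorem SwordB_append (acc : EucB n ≃ₗ[ℝ] EucB n) (K L : List (EucB n)) :
    SwordB n θ ε acc (K ++ L) =
      SwordB n θ ε acc K + SwordB n θ ε (acc * (wordProdB n K)⁻¹) L := by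
  induction K generalizing acc with
  | nil => simp [SwordB, wordProdB]
  | cons β K ih =>
    rw [List.cons_append, SwordB, SwordB, ih, wordProdB_cons, mul_inv_rev, inv_sReflB, mul_assoc,
      add_assoc]

-- Each term of the sum is the class of `x - s_β x = ⟪β, x⟫ β∨`, so the sum telescopes.
theorem exists_fixedQClass_eq_SwordB {x : EucB n} (hx : RepresentsGrading θ ε x)
    {L : List (EucB n)} (hL : ∀ β ∈ L, β ∈ imagRoots n θ) :
    ∃ u : fixedQ n θ, ((u : QvB n) : EucB n) = x - wordProdB n L x ∧
      fixedQClass n θ u = SwordB n θ ε 1 L := by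
  induction L generalizing ε x with
  | nil => exact ⟨0, by simp [wordProdB], by simp [SwordB]⟩
  | cons β L ih =>
    obtain ⟨hβ, hL⟩ := List.forall_mem_cons.1 hL
    obtain ⟨k, hk, hkε⟩ := hx β hβ
    obtain ⟨u, hu, hum⟩ := ih (hx.sReflB hβ) hL
    obtain ⟨c, hc, hcm⟩ := exists_fixedQClass_eq_mB hβ
    have hstep : x - sReflB n β x = k • corootB n β := by
      rw [sReflB_apply, sub_sub_cancel, ← Int.cast_smul_eq_zsmul ℝ, ← hk, corootB,
        real_inner_smul_right, smul_smul, real_inner_comm x β, mul_comm]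
    refine ⟨k • c + u, ?_, ?_⟩
    · push_cast
      rw [hc, hu, ← hstep, wordProdB_cons, LinearEquiv.mul_apply, sub_add_sub_cancel]
    · rw [map_add, map_zsmul, hcm, hum, SwordB, SwordB_comp, LinearEquiv.coe_one, id, ← hkε,
        intCast_val_smul_MthB, mul_one, one_mul]

theorem SwordB_eq_of_wordProdB_eq {x : EucB n} (hx : RepresentsGrading θ ε x)
    {K L : List (EucB n)} (hK : ∀ β ∈ K, β ∈ imagRoots n θ) (hL : ∀ β ∈ L, β ∈ imagRoots n θ)
    (hKL : wordProdB n K = wordProdB n L) : SwordB n θ ε 1 K = SwordB n θ ε 1 L := by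
  obtain ⟨u, hu, huK⟩ := exists_fixedQClass_eq_SwordB hx hK
  obtain ⟨v, hv, hvL⟩ := exists_fixedQClass_eq_SwordB hx hL
  have huv : u = v := Subtype.ext (Subtype.ext (by rw [hu, hv, hKL]))
  rw [← huK, ← hvL, huv]

end WordSum

theorem mEps_cross_action_general {n : ℕ} {θ : EucB n ≃ₗ[ℝ] EucB n} {ε : EucB n → ZMod 2}
    (hneg : ∀ α ∈ imagRoots n θ, ε (-α) = ε α)
    (hadd : ∀ α ∈ imagRoots n θ, ∀ β ∈ imagRoots n θ, α + β ∈ DeltaB n →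
      ε (α + β) = ε α + ε β)
    {w τ : EucB n ≃ₗ[ℝ] EucB n} {Lw Lwτ Lτ : List (EucB n)}
    (hLw : ∀ β ∈ Lw, β ∈ imagRoots n θ) (hLwτ : ∀ β ∈ Lwτ, β ∈ imagRoots n θ)
    (hLτ : ∀ β ∈ Lτ, β ∈ imagRoots n θ)
    (hLwProd : wordProdB n Lw = w) (hLwτProd : wordProdB n Lwτ = w * τ)
    (hLτProd : wordProdB n Lτ = τ) :
    SwordB n θ (fun α => ε (τ⁻¹ α)) 1 Lw = SwordB n θ ε 1 Lwτ + SwordB n θ ε 1 Lτ := by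
  obtain ⟨x, hx⟩ := exists_representsGrading hneg hadd
  have hindep : SwordB n θ ε 1 Lwτ = SwordB n θ ε 1 (Lτ ++ Lw) :=
    SwordB_eq_of_wordProdB_eq hx hLwτ (List.forall_mem_append.2 ⟨hLτ, hLw⟩)
      (by rw [wordProdB_append, hLwτProd, hLwProd, hLτProd])
  calc SwordB n θ (fun α => ε (τ⁻¹ α)) 1 Lw
      = SwordB n θ ε τ⁻¹ Lw := by rw [SwordB_comp, mul_one]
    _ = SwordB n θ ε 1 (Lτ ++ Lw) + SwordB n θ ε 1 Lτ := by
      rw [SwordB_append, hLτProd, one_mul, add_right_comm, MthB_add_self, zero_add]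
    _ = SwordB n θ ε 1 Lwτ + SwordB n θ ε 1 Lτ := by rw [hindep]

/-- Cross action formula: for a grading `ε` of `Δ_i` and `w, τ ∈ W_i`, with the
cross-acted grading `(τ×ε)(α) = ε(τ⁻¹α)`, one has `m_{τ×ε}(w) = m_ε(wτ) + m_ε(τ)` in
`M_θ` — stated via arbitrary reduced expressions `Lw`, `Lwτ`, `Lτ` of `w`, `wτ`, `τ` as
words in the simple imaginary roots `Π_i`. -/
theorem mEps_cross_action (n : ℕ) (hn : 0 < n)
    (θ : EucB n ≃ₗ[ℝ] EucB n) (hθW : θ ∈ WeylB n) (hθ2 : θ * θ = 1)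
    (ε : EucB n → ZMod 2)
    (hε1 : ∀ α, α ∈ DeltaB n → θ α = α → ε (-α) = ε α)
    (hε2 : ∀ α β : EucB n, α ∈ DeltaB n → θ α = α → β ∈ DeltaB n → θ β = β →
      α + β ∈ DeltaB n → ε (α + β) = ε α + ε β)
    (w τ : EucB n ≃ₗ[ℝ] EucB n)
    (Lw Lwτ Lτ : List (EucB n))
    (hLw : ∀ β ∈ Lw, β ∈ SimpleImB n θ) (hLwτ : ∀ β ∈ Lwτ, β ∈ SimpleImB n θ)
    (hLτ : ∀ β ∈ Lτ, β ∈ SimpleImB n θ)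
    (hLwProd : wordProdB n Lw = w) (hLwτProd : wordProdB n Lwτ = w * τ)
    (hLτProd : wordProdB n Lτ = τ)
    (hLwMin : ∀ K : List (EucB n), (∀ β ∈ K, β ∈ SimpleImB n θ) → wordProdB n K = w →
      Lw.length ≤ K.length)
    (hLwτMin : ∀ K : List (EucB n), (∀ β ∈ K, β ∈ SimpleImB n θ) →
      wordProdB n K = w * τ → Lwτ.length ≤ K.length)
    (hLτMin : ∀ K : List (EucB n), (∀ β ∈ K, β ∈ SimpleImB n θ) → wordProdB n K = τ →
      Lτ.length ≤ K.length) :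
    SwordB n θ (fun α => ε ((τ⁻¹ : EucB n ≃ₗ[ℝ] EucB n) α)) 1 Lw =
      SwordB n θ ε 1 Lwτ + SwordB n θ ε 1 Lτ :=
  mEps_cross_action_general (fun α h => hε1 α h.1 h.2)
    (fun α hα β hβ => hε2 α β hα.1 hα.2 hβ.1 hβ.2)
    (fun β h => SimpleImB_subset_imagRoots (hLw β h))
    (fun β h => SimpleImB_subset_imagRoots (hLwτ β h))
    (fun β h => SimpleImB_subset_imagRoots (hLτ β h)) hLwProd hLwτProd hLτProd
end
end

section
/- Assume n is even and set αᵢ = e_{2i−1} − e_{2i} for 1 ≤ i ≤ n/2 (so αᵢ∨ = αᵢ). Then for every root δ ∈ Δ, the integer ∑_{i=1}^{n/2} ⟪δ, αᵢ∨⟫ is even if δ is long (δ = ±e_k ± e_l, k < l) and odd if δ is short (δ = ±e_k). (This computes the value of the root character of δ on the element z = m̃_{α₁}⋯m̃_{α_{n/2}}: it equals +1 if δ is long and −1 if δ is short.) -/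
/-!
Pairing an integral vector `v` with `∑ i, αᵢ` gives an alternating sum of the coordinates of `v`.
Modulo `2` signs are irrelevant and `x ≡ x²`, so this sum is congruent to `∑ k, vₖ² = ⟪v, v⟫`.
Roots of type `Bₙ` are integral, and their squared length is `2` if they are long and `1` if short.
-/

open scoped RealInnerProductSpace

noncomputable section

/-- For `n = 2m`, the root `αᵢ = e_{2i−1} − e_{2i}` (1-based), `1 ≤ i ≤ m`. -/
def alphB (m : ℕ) (i : Fin m) : EucB (2 * m) :=
  eB (2 * m) ⟨2 * i.1, by have := i.isLt; omega⟩ -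
    eB (2 * m) ⟨2 * i.1 + 1, by have := i.isLt; omega⟩

/-- The lattice `ℤⁿ ⊆ ℝⁿ` of integral vectors, which contains the root system `Δ`. -/
def latticeB (n : ℕ) : Submodule ℤ (EucB n) := Submodule.span ℤ (Set.range (eB n))

theorem mem_latticeB_iff {n : ℕ} {v : EucB n} :
    v ∈ latticeB n ↔ ∀ i, ∃ k : ℤ, (k : ℝ) = v i := by
  have hbasis : ⇑(EuclideanSpace.basisFun (Fin n) ℝ).toBasis = eB n := by
    ext1 i
    simp [eB]
  simpa [hbasis, latticeB] using
    (EuclideanSpace.basisFun (Fin n) ℝ).toBasis.mem_span_iff_repr_mem ℤ v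

theorem DeltaB_subset_latticeB (n : ℕ) : DeltaB n ⊆ latticeB n := by
  have heB (i : Fin n) : eB n i ∈ latticeB n := Submodule.subset_span (Set.mem_range_self i)
  rintro _ (⟨i, j, -, rfl | rfl | rfl | rfl⟩ | ⟨i, rfl | rfl⟩)
  · exact add_mem (heB i) (heB j)
  · exact sub_mem (heB i) (heB j)
  · exact add_mem (neg_mem (heB i)) (heB j)
  · exact sub_mem (neg_mem (heB i)) (heB j)
  · exact heB i
  · exact neg_mem (heB i)

theorem inner_eB_right {n : ℕ} (v : EucB n) (i : Fin n) : ⟪v, eB n i⟫ = v i := by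
  simp [eB, EuclideanSpace.inner_single_right]

theorem inner_alphB_right {m : ℕ} (v : EucB (2 * m)) (i : Fin m) :
    ⟪v, alphB m i⟫ = v ⟨2 * i, by omega⟩ - v ⟨2 * i + 1, by omega⟩ := by
  simp only [alphB, inner_sub_right, inner_eB_right]

theorem inner_alphB_self {m : ℕ} (i : Fin m) : ⟪alphB m i, alphB m i⟫ = (2 : ℝ) := by
  rw [inner_alphB_right]
  norm_num [alphB, eB]

theorem corootB_eq_self {n : ℕ} {α : EucB n} (hα : ⟪α, α⟫ = (2 : ℝ)) : corootB n α = α := by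
  rw [corootB, hα, div_self two_ne_zero, one_smul]

theorem sum_univ_two_mul {M : Type*} [AddCommMonoid M] {m : ℕ} (f : Fin (2 * m) → M) :
    ∑ k, f k = ∑ i : Fin m, (f ⟨2 * i, by omega⟩ + f ⟨2 * i + 1, by omega⟩) := by
  rw [← (finProdFinEquiv.trans (finCongr (mul_comm m 2))).sum_comp, Fintype.sum_prod_type]
  refine Fintype.sum_congr _ _ fun i ↦ (Fin.sum_univ_two _).trans ?_
  exact congrArg₂ (f · + f ·) (Fin.ext (zero_add (2 * i.1))) (Fin.ext (add_comm 1 (2 * i.1)))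

theorem even_sum_sub_sub_sum_sq {m : ℕ} (x : Fin (2 * m) → ℤ) :
    Even (∑ i : Fin m, (x ⟨2 * i, by omega⟩ - x ⟨2 * i + 1, by omega⟩) - ∑ k, x k ^ 2) := by
  rw [sum_univ_two_mul, ← Finset.sum_sub_distrib]
  refine Finset.even_sum _ fun i _ ↦ ?_
  simp only [Int.even_sub, Int.even_add, Int.even_pow' two_ne_zero]

theorem sum_pairing_parity_general (m : ℕ) (v : EucB (2 * m)) (hv : v ∈ latticeB (2 * m)) :
    ∃ k : ℤ, ∑ i : Fin m, ⟪v, corootB (2 * m) (alphB m i)⟫ = ⟪v, v⟫ + 2 * k := by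
  choose x hx using mem_latticeB_iff.mp hv
  obtain ⟨k, hk⟩ := (even_sum_sub_sub_sum_sq x).two_dvd
  have hpair (i : Fin m) : ⟪v, corootB (2 * m) (alphB m i)⟫ =
      ((x ⟨2 * i, by omega⟩ - x ⟨2 * i + 1, by omega⟩ : ℤ) : ℝ) := by
    rw [corootB_eq_self (inner_alphB_self i), inner_alphB_right, ← hx, ← hx, Int.cast_sub]
  have hself : ⟪v, v⟫ = ((∑ j, x j ^ 2 : ℤ) : ℝ) := by
    simp only [real_inner_self_eq_norm_sq, EuclideanSpace.real_norm_sq_eq, ← hx, Int.cast_sum,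
      Int.cast_pow]
  refine ⟨k, ?_⟩
  simp only [hpair, hself]
  exact_mod_cast sub_eq_iff_eq_add'.mp hk

/-- Assume `n = 2m` is even and let `αᵢ = e_{2i−1} − e_{2i}` for `1 ≤ i ≤ m` (so
`αᵢ∨ = αᵢ`).  For every root `δ ∈ Δ`, the integer `∑_{i=1}^{m} ⟪δ, αᵢ∨⟫` is even if `δ`
is long and odd if `δ` is short. -/
theorem sum_pairing_parity (m : ℕ) (hm : 0 < m)
    (δ : EucB (2 * m)) (hδ : δ ∈ DeltaB (2 * m)) :
    (⟪δ, δ⟫ = (2 : ℝ) →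
      ∃ k : ℤ, ∑ i : Fin m, ⟪δ, corootB (2 * m) (alphB m i)⟫ = 2 * k) ∧
    (⟪δ, δ⟫ = (1 : ℝ) →
      ∃ k : ℤ, ∑ i : Fin m, ⟪δ, corootB (2 * m) (alphB m i)⟫ = 2 * k + 1) := by
  obtain ⟨k, hk⟩ := sum_pairing_parity_general m δ (DeltaB_subset_latticeB _ hδ)
  exact ⟨fun h ↦ ⟨k + 1, by rw [hk, h]; push_cast; ring⟩, fun h ↦ ⟨k, by rw [hk, h, add_comm]⟩⟩
end
end
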